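/- Let G be a finite connected simple graph and let K be a nonempty subset of its vertices. Define the graph H on vertex set K by: u is adjacent to w in H if and only if u ≠ w and there exists a walk in G from u to w all of whose internal vertices lie outside K. Then H is connected. -/

import Mathlib

/-!
Cutting a walk of `G` between two kept vertices at each of its visits to `K` leaves segments whose
internal vertices are all reduced, and each segment is an edge of the Kron reduction unless its
endpoints coincide.
-/

section KronReduction

variable {V : Type*} {G : SimpleGraph V} {K : Set V}

/-- The combinatorial Kron reduction of `G` onto the kept vertices `K`. A vertex of a walk counts as
internal when it differs from both endpoints, so the walk may return to its endpoints. -/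
def kronReduction (G : SimpleGraph V) (K : Set V) : SimpleGraph K where
  Adj u w := u ≠ w ∧
    ∃ p : G.Walk u.1 w.1, ∀ x ∈ p.support, x ≠ u.1 → x ≠ w.1 → x ∉ K
  symm := ⟨fun _ _ ⟨huw, p, hp⟩ ↦ ⟨huw.symm, p.reverse, fun x hx hxw hxu ↦
    hp x (by simpa only [SimpleGraph.Walk.support_reverse, List.mem_reverse] using hx) hxu hxw⟩⟩
  loopless := ⟨fun _ h ↦ h.1 rfl⟩

theorem kronReduction_reachable_of_walk {u w : K} (p : G.Walk u.1 w.1)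
    (hp : ∀ x ∈ p.support, x ≠ u.1 → x ≠ w.1 → x ∉ K) : (kronReduction G K).Reachable u w := by
  by_cases huw : u = w
  · exact huw ▸ .refl u
  · exact SimpleGraph.Adj.reachable ⟨huw, p, hp⟩

theorem exists_walk_to_first_kept_vertex {v w : V} (p : G.Walk v w) (hw : w ∈ K) :
    ∃ k : K, (∃ q : G.Walk v k.1, ∀ x ∈ q.support, x ∈ K → x = k.1) ∧
      (kronReduction G K).Reachable k ⟨w, hw⟩ := by
  induction p with
  | nil => exact ⟨⟨_, hw⟩, ⟨.nil, fun x hx _ ↦ by simpa using hx⟩, .refl _⟩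
  | @cons v _ _ hadj _ ih =>
    obtain ⟨k, ⟨q, hq⟩, hkw⟩ := ih hw
    by_cases hv : v ∈ K
    · have hvk : (kronReduction G K).Reachable ⟨v, hv⟩ k :=
        kronReduction_reachable_of_walk (.cons hadj q) fun x hx hxv hxk hxK ↦
          hxk (hq x ((List.mem_cons.mp hx).resolve_left hxv) hxK)
      exact ⟨⟨v, hv⟩, ⟨.nil, fun x hx _ ↦ by simpa using hx⟩, hvk.trans hkw⟩
    · refine ⟨k, ⟨.cons hadj q, fun x hx hxK ↦ ?_⟩, hkw⟩
      have hxv : x ≠ v := fun h ↦ hv (h ▸ hxK)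
      exact hq x ((List.mem_cons.mp hx).resolve_left hxv) hxK

theorem kronReduction_reachable_iff {u w : K} :
    (kronReduction G K).Reachable u w ↔ G.Reachable u.1 w.1 := by
  constructor
  · rintro ⟨p⟩
    induction p with
    | nil => exact .refl _
    | cons hadj _ ih =>
      obtain ⟨-, q, -⟩ := hadj
      exact q.reachable.trans ih
  · rintro ⟨p⟩
    obtain ⟨k, ⟨q, hq⟩, hkw⟩ := exists_walk_to_first_kept_vertex p w.2
    have huk : u = k := Subtype.ext (hq u.1 q.start_mem_support u.2)
    exact huk ▸ hkw

theorem kron_reduction_preserves_connectivity_general (hG : G.Connected) (hK : K.Nonempty) :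
    (kronReduction G K).Connected where
  preconnected u w := kronReduction_reachable_iff.mpr (hG.preconnected u.1 w.1)
  nonempty := hK.to_subtype

end KronReduction

/-- **Kron reduction preserves connectivity.**
Let `G` be a finite connected simple graph and `K` a nonempty set of vertices.
The graph `H` on `K`, in which two kept vertices are adjacent iff they are
distinct and joined in `G` by a walk all of whose internal vertices lie
outside `K`, is connected. -/
theorem kron_reduction_preserves_connectivity {V : Type} [Fintype V]
    (G : SimpleGraph V) (hG : G.Connected)
    (K : Set V) (hK : K.Nonempty)
    (H : SimpleGraph K)
    (hH : ∀ u w : K, H.Adj u w ↔ u ≠ w ∧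
      ∃ p : G.Walk u.1 w.1, ∀ x ∈ p.support, x ≠ u.1 → x ≠ w.1 → x ∉ K) :
    H.Connected := by
  obtain rfl : H = kronReduction G K := SimpleGraph.ext (funext₂ fun u w ↦ propext (hH u w))
  exact kron_reduction_preserves_connectivity_general hG hK
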